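/- Let q = 2^k with k a positive integer, and let B(X) = X^6 + X^4 + X^2 + X + 1 ∈ F_2[X] (this is B_2 from Table 1 with (Q,R,S) = (1,2,2), σ = (1,-1,-1), since in characteristic 2 signs vanish: B_2(X) = X^{Q+R} + X^{Q+S} - X^{R+S} - X^Q + 1 = X^3 + X^3 + X^4 + X + 1, i.e. X^4 + X + 1 when the two X^3 terms cancel). Precisely: with (Q,R,S)=(1,2,2) we get B_2(X) = X^3 + X^3 + X^4 + X + 1 = X^4 + X + 1 over F_2. Then f(X) = X^5 · (X^{4(q-1)} + X^{q-1} + 1) permutes F_{q^2} if and only if gcd(5, q-1) = 1 and gcd(5, q + e) = 1, where e ∈ {1,-1} with q ≡ e (mod 3). -/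

import Mathlib

section

variable {F : Type*} [Field F]

/-- In characteristic two, with `ω` a primitive cube root of unity, the binary quintic form
`x ^ 5 + x ^ 4 * y + x * y ^ 4` and its swap combine to a pure fifth power. -/
theorem quintic_swap_add_eq_pow_five (h2 : (2 : F) = 0) {ω : F} (hω : ω ^ 2 + ω + 1 = 0)
    (x y : F) :
    (y ^ 5 + y ^ 4 * x + y * x ^ 4) + ω ^ 2 * (x ^ 5 + x ^ 4 * y + x * y ^ 4) =
      (y + ω * x) ^ 5 := by
  grind

theorem eq_of_pow_five_eq {n : ℕ} (hn : Nat.gcd 5 n = 1) {a b : F} (h5 : a ^ 5 = b ^ 5)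
    (h : a ≠ 0 → b ≠ 0 → (a / b) ^ n = 1) : a = b := by
  rcases eq_or_ne b 0 with rfl | hb
  · simpa using h5
  · have ha : a ≠ 0 := by
      rintro rfl
      exact hb (by simpa using h5.symm)
    have h1 : (a / b) ^ 5 = 1 := by rw [div_pow, h5, div_self (pow_ne_zero 5 hb)]
    have h2 : (a / b) ^ Nat.gcd 5 n = 1 := pow_gcd_eq_one.mpr ⟨h1, h ha hb⟩
    rw [hn, pow_one, div_eq_one_iff_eq hb] at h2
    exact h2

theorem exists_prime_root_of_unity [Fintype F] {p : ℕ} (hp : p.Prime)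
    (h : p ∣ Fintype.card F - 1) : ∃ z : F, z ^ p = 1 ∧ z ≠ 1 := by
  classical
  have := Fact.mk hp
  obtain ⟨z, hz⟩ := exists_prime_orderOf_dvd_card (G := Fˣ) p (by rwa [Fintype.card_units])
  refine ⟨z, ?_, ?_⟩
  · rw [← Units.val_pow_eq_pow_val, ← hz, pow_orderOf_eq_one, Units.val_one]
  · intro h1
    rw [Units.val_eq_one] at h1
    rw [h1, orderOf_one] at hz
    exact hp.one_lt.ne hz

end


/-- Statement 13: for `q = 2^k`, the polynomial
`f(X) = X^5 (X^{4(q-1)} + X^{q-1} + 1)` permutes `F_{q^2}` iff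
`gcd(5, q-1) = 1` and `gcd(5, q+e) = 1`, where `e ∈ {1,-1}` with
`q ≡ e (mod 3)`. -/
theorem stmt13 (k q : ℕ) (hk : 0 < k) (hq : q = 2 ^ k)
    (F : Type*) [Field F] [Fintype F] (hF : Fintype.card F = q ^ 2)
    (e : ℤ) (he : e = 1 ∨ e = -1) (hqe : (q : ℤ) % 3 = e % 3) :
    Function.Bijective
        (fun x : F => x ^ 5 * ((x ^ (q - 1)) ^ 4 + x ^ (q - 1) + 1)) ↔
      (Nat.gcd 5 (q - 1) = 1 ∧ Int.gcd 5 ((q : ℤ) + e) = 1) := by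
  have h1q : 1 ≤ q := hq ▸ Nat.one_le_two_pow
  have : CharP F 2 := charP_of_card_eq_prime_pow (f := k * 2) (by rw [hF, hq, pow_mul])
  have h2 : (2 : F) = 0 := CharTwo.two_eq_zero
  have hcard : Fintype.card F - 1 = (q + 1) * (q - 1) := by
    rw [hF]; simpa using Nat.sq_sub_sq q 1
  have frob_add (a b : F) : (a + b) ^ q = a ^ q + b ^ q := by rw [hq, add_pow_char_pow]
  have frob_frob (a : F) : (a ^ q) ^ q = a := by
    rw [← pow_mul, ← sq, ← hF, FiniteField.pow_card]
  have hmod : q % 3 = 1 ∧ e = 1 ∨ q % 3 = 2 ∧ e = -1 := by omega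
  obtain ⟨ω, hω3, hω1⟩ : ∃ z : F, z ^ 3 = 1 ∧ z ≠ 1 := by
    refine exists_prime_root_of_unity Nat.prime_three ?_
    rw [hcard]
    rcases hmod with ⟨h, -⟩ | ⟨h, -⟩
    · exact Dvd.dvd.mul_left (by omega) _
    · exact Dvd.dvd.mul_right (by omega) _
  have hω : ω ^ 2 + ω + 1 = 0 := by
    refine (mul_eq_zero.mp ?_).resolve_left (sub_ne_zero.mpr hω1)
    linear_combination hω3
  have hω' : (ω ^ 2) ^ 2 + ω ^ 2 + 1 = 0 := by linear_combination ω * hω3 + hω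
  set f : F → F := fun x => x ^ 5 * ((x ^ (q - 1)) ^ 4 + x ^ (q - 1) + 1) with hf
  have f_eq (x : F) : f x = x ^ 5 + x ^ 4 * x ^ q + x * (x ^ q) ^ 4 := by
    have : x ^ q = x * x ^ (q - 1) := by rw [← pow_succ', Nat.sub_add_cancel h1q]
    rw [hf, this]; ring
  have f_frob (x : F) : f x ^ q = (x ^ q) ^ 5 + (x ^ q) ^ 4 * x + x ^ q * x ^ 4 := by
    rw [f_eq, frob_add, frob_add, mul_pow, mul_pow, ← pow_mul, ← pow_mul, mul_comm 5, mul_comm 4,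
      pow_mul, pow_mul, ← pow_mul _ 4 q, mul_comm 4, pow_mul _ q 4, frob_frob]
  have key (x : F) : f x ^ q + ω ^ 2 * f x = (x ^ q + ω * x) ^ 5 := by
    rw [f_frob, f_eq, quintic_swap_add_eq_pow_five h2 hω]
  have key' (x : F) : f x ^ q + ω * f x = (x ^ q + ω ^ 2 * x) ^ 5 := by
    rw [f_frob, f_eq, ← quintic_swap_add_eq_pow_five h2 hω']
    linear_combination (-ω) * (x ^ 5 + x ^ 4 * x ^ q + x * (x ^ q) ^ 4) * hω3
  have gcd_left (h : Function.Injective f) : Nat.gcd 5 (q - 1) = 1 := by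
    refine (Nat.Prime.coprime_iff_not_dvd Nat.prime_five).mpr fun hd => ?_
    obtain ⟨z, hz5, hz1⟩ := exists_prime_root_of_unity (F := F) Nat.prime_five
      (hcard ▸ Dvd.dvd.mul_left hd _)
    obtain ⟨c, hc⟩ := hd
    refine hz1 (h ?_)
    simp only [hf, hc, pow_mul, hz5, one_pow]
  rw [← Finite.injective_iff_bijective]
  rcases hmod with ⟨hm, rfl⟩ | ⟨hm, rfl⟩
  · have hωq : ω ^ q = ω := by
      rw [← Nat.div_add_mod q 3, hm, pow_add, pow_mul, hω3, one_pow, one_mul, pow_one]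
    have hgcd : Int.gcd 5 ((q : ℤ) + 1) = Nat.gcd 5 (q + 1) := by
      exact_mod_cast Int.gcd_natCast_natCast 5 (q + 1)
    have recover (x : F) : (x ^ q + ω * x) + ω ^ 2 * (x ^ q + ω * x) ^ q = x := by
      rw [frob_add, frob_frob, mul_pow, hωq]
      grind
    have recover' (x : F) : (x ^ q + ω ^ 2 * x) + ω * (x ^ q + ω ^ 2 * x) ^ q = x := by
      rw [frob_add, frob_frob, mul_pow, ← pow_mul, mul_comm 2, pow_mul, hωq]
      grind
    have hL : Function.Injective fun x : F => x ^ q + ω * x := fun x y h => by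
      rw [← recover x, ← recover y]; simp only at h; rw [h]
    have hL' : Function.Injective fun x : F => x ^ q + ω ^ 2 * x := fun x y h => by
      rw [← recover' x, ← recover' y]; simp only at h; rw [h]
    rw [hgcd]
    refine ⟨fun h => ⟨gcd_left h, ?_⟩, fun ⟨h₁, h₂⟩ x y hxy => hL ?_⟩
    · refine (Nat.Prime.coprime_iff_not_dvd Nat.prime_five).mpr fun hd => ?_
      obtain ⟨z, hz5, hz1⟩ := exists_prime_root_of_unity (F := F) Nat.prime_five
        (hcard ▸ Dvd.dvd.mul_right hd _)
      obtain ⟨x, hx⟩ := Finite.surjective_of_injective hL z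
      obtain ⟨y, hy⟩ := Finite.surjective_of_injective hL 1
      simp only at hx hy
      have hxy : x = y := h (hL' (by simp only [key, hx, hy, hz5, one_pow]))
      exact hz1 (by rw [← hx, ← hy, hxy])
    · have h5 : Nat.gcd 5 (Fintype.card F - 1) = 1 := hcard ▸ Nat.Coprime.mul_right h₂ h₁
      have h0 := key x
      rw [hxy, key y] at h0
      exact (eq_of_pow_five_eq h5 h0 fun hy hx =>
        FiniteField.pow_card_sub_one_eq_one _ (div_ne_zero hy hx)).symm
  · have hωq : ω ^ q = ω ^ 2 := by
      rw [← Nat.div_add_mod q 3, hm, pow_add, pow_mul, hω3, one_pow, one_mul]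
    have hgcd : Int.gcd 5 ((q : ℤ) + -1) = Nat.gcd 5 (q - 1) := by
      have : (q : ℤ) + -1 = ((q - 1 : ℕ) : ℤ) := by omega
      rw [this]
      exact_mod_cast Int.gcd_natCast_natCast 5 (q - 1)
    rw [hgcd, and_self]
    have cancel (h5 : Nat.gcd 5 (q - 1) = 1) (c a b : F) (hc : c ≠ 0) (ha : a ^ q = c * a)
        (hb : b ^ q = c * b) (h : a ^ 5 = b ^ 5) : a = b := by
      refine eq_of_pow_five_eq h5 h fun ha0 hb0 => ?_
      refine mul_right_cancel₀ (div_ne_zero ha0 hb0) ?_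
      rw [← pow_succ, Nat.sub_add_cancel h1q, div_pow, ha, hb, mul_div_mul_left _ _ hc, one_mul]
    have hω0 : ω ≠ 0 := by rintro rfl; simp at hω
    have frob_left (x : F) : (x ^ q + ω * x) ^ q = ω ^ 2 * (x ^ q + ω * x) := by
      rw [frob_add, frob_frob, mul_pow, hωq]
      linear_combination (-x) * hω3
    have frob_right (x : F) : (x ^ q + ω ^ 2 * x) ^ q = ω * (x ^ q + ω ^ 2 * x) := by
      rw [frob_add, frob_frob, mul_pow, ← pow_mul, mul_comm 2, pow_mul, hωq]
      linear_combination (ω * x ^ q - x) * hω3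
    refine ⟨gcd_left, fun h5 x y hxy => ?_⟩
    have hu := cancel h5 _ _ _ (pow_ne_zero 2 hω0) (frob_left x) (frob_left y)
      (by rw [← key, ← key, hxy])
    have hv := cancel h5 _ _ _ hω0 (frob_right x) (frob_right y) (by rw [← key', ← key', hxy])
    linear_combination -hu - hv + (x - y) * hω + (x ^ q - y ^ q) * h2
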